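/- Identify ℕ with ℕ × ℕ and for f : ℕ → ℕ and k ∈ ℕ set U(f,k) = {(m,n) : m ≥ k and n ≥ f(m)}. A free ultrafilter u on ℕ × ℕ fails to be a P-point if and only if there exists a bijection π of ℕ × ℕ such that U(f,k) belongs to the image ultrafilter {X : π⁻¹[X] ∈ u} for every f : ℕ → ℕ and every k ∈ ℕ. (Hence the permutation images of the nowhere dense set B = ⋂_{f,k} U(f,k)* consist exactly of the non-P-points of (ℕ×ℕ)*.) -/

import Mathlib

/-- A free ultrafilter: one containing no finite set. -/
def IsFreeUF {α : Type*} (u : Ultrafilter α) : Prop := ∀ A ∈ u, Set.Infinite A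

/-- A P-point: for every sequence of members there is a pseudo-intersection in the filter. -/
def IsPPoint {α : Type*} (u : Ultrafilter α) : Prop :=
  ∀ A : ℕ → Set α, (∀ n, A n ∈ u) → ∃ B ∈ u, ∀ n, (B \ A n).Finite

/-- `U(f,k) = {(m,n) : m ≥ k ∧ n ≥ f(m)}`. -/
def Uset (f : ℕ → ℕ) (k : ℕ) : Set (ℕ × ℕ) := {p : ℕ × ℕ | k ≤ p.1 ∧ f p.1 ≤ p.2}

/-- If `u` is not a P-point, then some `g : α → ℕ` is neither bounded nor finite-to-one
on any member of `u`. -/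
theorem exists_nat_fun_of_not_isPPoint {α : Type*} {u : Ultrafilter α} (h : ¬ IsPPoint u) :
    ∃ g : α → ℕ, (∀ n, {x | n ≤ g x} ∈ u) ∧
      ∀ B ∈ u, ∃ n, (B ∩ {x | g x = n}).Infinite := by
  classical
  unfold IsPPoint at h
  push Not at h
  obtain ⟨A, hA, hB⟩ := h
  have hC : {x | ∃ n, x ∉ A n} ∈ u := by
    by_contra hC
    obtain ⟨n, hn⟩ := hB _ (Ultrafilter.compl_mem_iff_notMem.mpr hC)
    refine hn (Set.finite_empty.subset fun x hx => ?_)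
    exact hx.1 ⟨n, hx.2⟩
  refine ⟨fun x => if hx : ∃ n, x ∉ A n then Nat.find hx else 0, fun n => ?_, fun B hBu => ?_⟩
  · have hI : (⋂ i ∈ Set.Iio n, A i) ∈ (u : Filter α) :=
      (Filter.biInter_mem (Set.finite_Iio n)).mpr fun i _ => hA i
    filter_upwards [hI, hC] with x hxI hxC
    have hx : ∃ n, x ∉ A n := hxC
    simp only [dif_pos hx, Nat.le_find_iff, not_not]
    exact fun m hm => Set.mem_iInter₂.mp hxI m hm
  · obtain ⟨n, hn⟩ := hB _ (Filter.inter_mem hBu hC)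
    by_contra! hfin
    refine hn (((Set.finite_Iic n).biUnion fun i _ => hfin i).subset ?_)
    rintro x ⟨⟨hxB, hxC⟩, hxn⟩
    have hx : ∃ n, x ∉ A n := hxC
    refine Set.mem_biUnion (x := Nat.find hx) (Nat.find_min' hx hxn) ⟨hxB, ?_⟩
    simp [dif_pos hx]

/-- The function of `exists_nat_fun_of_not_isPPoint` can be chosen with all fibres infinite. -/
theorem exists_nat_fun_infinite_fibers_of_not_isPPoint {α : Type*} {u : Ultrafilter α}
    (h : ¬ IsPPoint u) :
    ∃ g : α → ℕ, (∀ n, {x | g x = n}.Infinite) ∧ (∀ n, {x | n ≤ g x} ∈ u) ∧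
      ∀ B ∈ u, ∃ n, (B ∩ {x | g x = n}).Infinite := by
  classical
  obtain ⟨g, hg, hB⟩ := exists_nat_fun_of_not_isPPoint h
  let p : ℕ → Prop := fun n => {x | g x = n}.Infinite
  have hp : (Set.ofPred p).Infinite := by
    refine Set.infinite_of_not_bddAbove ?_
    rintro ⟨N, hN⟩
    obtain ⟨n, hn⟩ := hB _ (hg (N + 1))
    have hnN : n ≤ N := hN (show p n from hn.mono Set.inter_subset_right)
    obtain ⟨x, hx, hxn⟩ := hn.nonempty
    simp only [Set.mem_ofPred_eq] at hx hxn
    omega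
  refine ⟨fun x => Nat.count p (g x), fun n => ?_, fun n => ?_, fun B hBu => ?_⟩
  · refine (Nat.nth_mem_of_infinite hp n).mono fun x hx => ?_
    simp only [Set.mem_ofPred_eq] at hx ⊢
    rw [hx, Nat.count_nth_of_infinite hp]
  · filter_upwards [hg (Nat.nth p n)] with x hx
    simpa [Nat.count_nth_of_infinite hp] using Nat.count_monotone p hx
  · obtain ⟨n, hn⟩ := hB B hBu
    refine ⟨Nat.count p n, hn.mono fun x hx => ⟨hx.1, ?_⟩⟩
    simp only [Set.mem_ofPred_eq]
    rw [hx.2]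

/-- A function to `ℕ` with infinite fibres on a countable type is, up to a bijection,
the first projection of `ℕ × ℕ`. -/
theorem exists_equiv_prod_fst_eq {α : Type*} [Countable α] (g : α → ℕ)
    (hg : ∀ n, {x | g x = n}.Infinite) : ∃ e : α ≃ ℕ × ℕ, ∀ x, (e x).1 = g x := by
  have hne : ∀ n, Nonempty ({x // g x = n} ≃ ℕ) := fun n => by
    have : Infinite {x // g x = n} := (hg n).to_subtype
    exact nonempty_equiv_of_countable
  let e := fun n => (hne n).some
  exact ⟨(Equiv.sigmaFiberEquiv g).symm.trans
    ((Equiv.sigmaCongrRight e).trans (Equiv.sigmaEquivProd ℕ ℕ)), fun _ => rfl⟩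

theorem non_ppoint_iff_perm_image_contains_all_Usets
    (u : Ultrafilter (ℕ × ℕ)) (hu : IsFreeUF u) :
    ¬ IsPPoint u ↔ ∃ π : Equiv.Perm (ℕ × ℕ), ∀ (f : ℕ → ℕ) (k : ℕ),
      Uset f k ∈ Ultrafilter.map (⇑π) u := by
  constructor
  · intro h
    obtain ⟨g, hinf, hg, hB⟩ := exists_nat_fun_infinite_fibers_of_not_isPPoint h
    obtain ⟨π, hπ⟩ := exists_equiv_prod_fst_eq g hinf
    refine ⟨π, fun f k => ?_⟩
    rw [Ultrafilter.mem_map]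
    have hf : {x | f (π x).1 ≤ (π x).2} ∈ u := by
      by_contra hf
      obtain ⟨n, hn⟩ := hB _ (Ultrafilter.compl_mem_iff_notMem.mpr hf)
      refine hn (((Set.finite_Iio (f n)).image fun m => π.symm (n, m)).subset ?_)
      rintro x ⟨hx, hxn⟩
      have hx1 : (π x).1 = n := (hπ x).trans hxn
      have hx2 : (π x).2 < f n := by simpa [hx1] using hx
      exact ⟨(π x).2, hx2, by simp [← hx1]⟩
    filter_upwards [hg k, hf] with x hxk hxf
    exact ⟨by simpa [hπ] using hxk, hxf⟩
  · rintro ⟨π, hπ⟩ h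
    obtain ⟨B, hBu, hB⟩ := h (fun k => π ⁻¹' Uset 0 k) fun k => hπ 0 k
    have hbdd : ∀ m, ∃ b, ∀ x ∈ B, (π x).1 = m → (π x).2 < b := fun m => by
      obtain ⟨b, hb⟩ := ((hB (m + 1)).image fun x => (π x).2).bddAbove
      refine ⟨b + 1, fun x hx hxm => Nat.lt_succ_of_le (hb ⟨x, ⟨hx, fun hU => ?_⟩, rfl⟩)⟩
      have := hU.1
      omega
    choose f hf using hbdd
    obtain ⟨x, hxB, hxU⟩ := u.nonempty_of_mem (Filter.inter_mem hBu (hπ f 0))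
    exact (hf _ x hxB rfl).not_ge hxU.2
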